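/- Let H be a commutative algebra over a field k equipped with an exhaustive nonnegative filtration k ⊆ F₀H ⊆ F₁H ⊆ ⋯ by k-submodules with FᵢH·FⱼH ⊆ F_{i+j}H, and let M be a finitely generated H-module equipped with an exhaustive nonnegative filtration F₀M ⊆ F₁M ⊆ ⋯ by k-submodules with FᵢH·FⱼM ⊆ F_{i+j}M. Assume that the associated graded ring Gr H = ⊕ᵢ FᵢH/F_{i−1}H is an integral domain and that the associated graded module Gr M = ⊕ᵢ FᵢM/F_{i−1}M is a finitely generated Gr H-module. Then the rank of M over H equals the rank of Gr M over Gr H, i.e. dim_{Frac(H)} (Frac(H) ⊗_H M) = dim_{Frac(Gr H)} (Frac(Gr H) ⊗_{Gr H} Gr M). -/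

import Mathlib

/-!
Homogeneous elements span `Gr M`, so a maximal `Gr H`-independent family of symbols
`τ(mᵢ)`, `mᵢ ∈ F_{nᵢ}M`, spans a submodule with torsion quotient, and the rank of `Gr M` is the
size of this family. It remains to see that the lifts `mᵢ` are `H`-independent and that
`M / ⟨mᵢ⟩` is torsion.

Independence (`linearIndependent_lift`): the top-degree part of a relation `∑ hᵢ mᵢ = 0` is a
relation among the `τ(mᵢ)`, so the degrees of the `hᵢ` can be lowered indefinitely.

Torsion (`functional_eq_zero`): a finitely generated module over the domain `H` is torsion as soon
as it has no nonzero functional to `H` (`exists_functional_ne_zero`), so let `φ : M → H` kill all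
`mᵢ`. Since `Gr M` is finitely generated, `φ(F_jM) ⊆ F_{j+c}H` for some `c`
(`exists_degree_bound`). Given `x ∈ F_jM`, some nonzero homogeneous `σ_d(t)` carries `τ_j(x)` into
the span of the `τ(mᵢ)` (`exists_lift_smul`), so `t x` is a combination of the `mᵢ` modulo
`F_{d+j-1}M`. Hence `t φ(x) ∈ F_{d+j-1+c}H`, and `φ(x) ∈ F_{j+c-1}H` because `Gr H` is a domain.
So `c` can be decreased indefinitely, which forces `φ = 0`.
-/

open scoped TensorProduct

universe u₁ u₂ u₃ u₄ u₅

/-- An exhaustive nonnegative algebra filtration `k = F₋₁ ⊆ F₀ ⊆ F₁ ⊆ ⋯` of a commutative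
`k`-algebra `H` by `k`-submodules, with `Fᵢ·Fⱼ ⊆ F_{i+j}` (so in particular `k·1 ⊆ F₀`). -/
structure FilteredAlgData (k : Type*) [Field k] (H : Type*) [CommRing H] [Algebra k H] where
  F : ℕ → Submodule k H
  mono : Monotone F
  one_mem : (1 : H) ∈ F 0
  mul_le : ∀ i j, F i * F j ≤ F (i + j)
  exhaustive : ∀ a : H, ∃ i, a ∈ F i

/-- A realization of the commutative ring `G` as the associated graded ring
`Gr H = ⊕ᵢ FᵢH/F_{i−1}H` of the filtered algebra `H`: the degree-`i` symbol maps
`σ i : FᵢH → G` have kernels `F_{i−1}H` (with `F₋₁H = 0`), their ranges decompose `G` as an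
internal direct sum, and they intertwine the multiplications (and send `1` to `1`). -/
structure GradedRealization {k : Type*} [Field k] {H : Type*} [CommRing H] [Algebra k H]
    (D : FilteredAlgData k H) (G : Type*) [CommRing G] [Algebra k G] where
  σ : ∀ i : ℕ, D.F i →ₗ[k] G
  internal : DirectSum.IsInternal fun i : ℕ => LinearMap.range (σ i)
  map_one' : σ 0 ⟨1, D.one_mem⟩ = 1
  map_mul' : ∀ (i j : ℕ) (a : D.F i) (b : D.F j),
    σ i a * σ j b
      = σ (i + j) ⟨(a : H) * (b : H), D.mul_le i j (Submodule.mul_mem_mul a.2 b.2)⟩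
  ker_zero : ∀ a : D.F 0, σ 0 a = 0 ↔ (a : H) = 0
  ker_succ : ∀ (i : ℕ) (a : D.F (i + 1)), σ (i + 1) a = 0 ↔ (a : H) ∈ D.F i

/-- An exhaustive nonnegative filtration of an `H`-module `M` by `k`-submodules, compatible
with a filtration of `H`: `FᵢH · FⱼM ⊆ F_{i+j}M`. -/
structure FilteredModData (k : Type*) [Field k] (H : Type*) [CommRing H] [Algebra k H]
    (M : Type*) [AddCommGroup M] [Module k M] [Module H M] [IsScalarTower k H M]
    (D : FilteredAlgData k H) where
  FM : ℕ → Submodule k M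
  mono : Monotone FM
  smul_le : ∀ (i j : ℕ) (a : H), a ∈ D.F i → ∀ m : M, m ∈ FM j → a • m ∈ FM (i + j)
  exhaustive : ∀ m : M, ∃ i, m ∈ FM i

/-- A realization of the `G`-module `GM` as the associated graded module
`Gr M = ⊕ᵢ FᵢM/F_{i−1}M` of the filtered module `M` over the graded realization
`G` of `Gr H`: the degree-`i` symbol maps `τ i : FᵢM → GM` have kernels `F_{i−1}M`
(with `F₋₁M = 0`), their ranges decompose `GM` as an internal direct sum, and they
intertwine the module actions. -/
structure GradedModRealization {k : Type*} [Field k] {H : Type*} [CommRing H] [Algebra k H]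
    {M : Type*} [AddCommGroup M] [Module k M] [Module H M] [IsScalarTower k H M]
    {D : FilteredAlgData k H} {G : Type*} [CommRing G] [Algebra k G]
    (R : GradedRealization D G) (DM : FilteredModData k H M D)
    (GM : Type*) [AddCommGroup GM] [Module k GM] [Module G GM] [IsScalarTower k G GM] where
  τ : ∀ i : ℕ, DM.FM i →ₗ[k] GM
  internal : DirectSum.IsInternal fun i : ℕ => LinearMap.range (τ i)
  map_smul' : ∀ (i j : ℕ) (a : D.F i) (m : DM.FM j),
    R.σ i a • τ j m
      = τ (i + j) ⟨(a : H) • (m : M), DM.smul_le i j a a.2 m m.2⟩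
  ker_zero : ∀ m : DM.FM 0, τ 0 m = 0 ↔ (m : M) = 0
  ker_succ : ∀ (i : ℕ) (m : DM.FM (i + 1)), τ (i + 1) m = 0 ↔ (m : M) ∈ DM.FM i

/-! ### Modules over a domain and internal direct sums -/

/-- A non-torsion element of a finitely generated module over a domain is detected by an
`H`-valued functional: take a functional on the generic fibre and clear denominators. -/
lemma exists_functional_ne_zero {H Q : Type*} [CommRing H] [IsDomain H] [AddCommGroup Q]
    [Module H Q] [Module.Finite H Q] (x : Q) (hx : ∀ a : H, a ≠ 0 → a • x ≠ 0) :
    ∃ φ : Q →ₗ[H] H, φ x ≠ 0 := by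
  classical
  let K := FractionRing H
  let f : Q →ₗ[H] K ⊗[H] Q := TensorProduct.mk H K Q 1
  have hfx : f x ≠ 0 := by
    intro h
    obtain ⟨c, hc⟩ := (IsLocalizedModule.eq_zero_iff (nonZeroDivisors H) f).1 h
    exact hx c (nonZeroDivisors.ne_zero c.2) hc
  obtain ⟨ψ, hψ⟩ := Module.Projective.exists_dual_ne_zero K hfx
  let g : Q →ₗ[H] K := (ψ.restrictScalars H).comp f
  obtain ⟨S, hS⟩ := (Module.Finite.fg_top : (⊤ : Submodule H Q).FG)
  obtain ⟨b, hb⟩ := IsLocalization.exist_integer_multiples (nonZeroDivisors H) S (fun i => g i)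
  have hr : ∀ y : Q, ((b : H) • g) y ∈ LinearMap.range (Algebra.linearMap H K) := by
    intro y
    have hy : y ∈ Submodule.span H (S : Set Q) := hS ▸ Submodule.mem_top
    induction hy using Submodule.span_induction with
    | mem y hy =>
      obtain ⟨z, hz⟩ := hb y hy
      exact ⟨z, by simpa using hz⟩
    | zero => simp
    | add y z _ _ hy hz => rw [map_add]; exact Submodule.add_mem _ hy hz
    | smul a y _ hy => rw [map_smul]; exact Submodule.smul_mem _ _ hy
  let e := LinearEquiv.ofInjective (Algebra.linearMap H K) (IsFractionRing.injective H K)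
  refine ⟨e.symm.toLinearMap.comp (((b : H) • g).codRestrict _ hr), ?_⟩
  intro h
  have h1 : ((b : H) • g).codRestrict _ hr x = 0 := by simpa using h
  have h2 : (b : H) • g x = 0 := congrArg Subtype.val h1
  rcases smul_eq_zero.1 h2 with h3 | h3
  · exact nonZeroDivisors.ne_zero b.2 h3
  · exact hψ h3

/-- The rank of a module over a domain is the size of a linearly independent family whose span
has torsion quotient. -/
lemma lift_rank_eq_of_torsion {A : Type u₁} {N : Type u₂} {ι : Type u₃} [CommRing A] [IsDomain A]
    [AddCommGroup N] [Module A N] (v : ι → N) (hv : LinearIndependent A v)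
    (ht : ∀ x : N, ∃ a : A, a ≠ 0 ∧ a • x ∈ Submodule.span A (Set.range v)) :
    Cardinal.lift.{u₃} (Module.rank A N) = Cardinal.lift.{u₂} (Cardinal.mk ι) := by
  have h0 : Module.rank A (N ⧸ Submodule.span A (Set.range v)) = 0 := by
    rw [rank_eq_zero_iff]
    intro y
    obtain ⟨x, rfl⟩ := Submodule.Quotient.mk_surjective _ y
    obtain ⟨a, ha, hax⟩ := ht x
    exact ⟨a, ha, by rwa [← Submodule.Quotient.mk_smul, Submodule.Quotient.mk_eq_zero]⟩
  rw [← rank_quotient_add_rank_of_isDomain (Submodule.span A (Set.range v)), h0, zero_add,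
    rank_span hv]
  exact Cardinal.mk_range_eq_of_injective hv.injective

/-- The homogeneous component maps of an internal direct sum, together with the fact that the
summands span. -/
lemma exists_components {k N : Type*} [Field k] [AddCommGroup N] [Module k N]
    (A : ℕ → Submodule k N) (hA : DirectSum.IsInternal A) :
    ∃ p : ℕ → N →ₗ[k] N, (∀ i, ∀ x ∈ A i, p i x = x) ∧
      (∀ i j, i ≠ j → ∀ x ∈ A i, p j x = 0) ∧
      ∀ x, x ∈ ⨆ i, A i := by
  classical
  let e := LinearEquiv.ofBijective (DirectSum.coeLinearMap A) hA
  have he : ∀ i (x : A i), e.symm (x : N) = DirectSum.lof k ℕ (fun i => A i) i x := by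
    intro i x
    rw [LinearEquiv.symm_apply_eq]
    exact (DirectSum.coeLinearMap_lof A i x).symm
  refine ⟨fun i => (A i).subtype ∘ₗ DirectSum.component k ℕ (fun i => A i) i ∘ₗ
    e.symm.toLinearMap, ?_, ?_, ?_⟩
  · intro i x hx
    have := he i ⟨x, hx⟩
    simp only at this
    simp [this, DirectSum.component.lof_self]
  · intro i j hij x hx
    have := he i ⟨x, hx⟩
    simp only at this
    simp [this, DirectSum.component.of, hij]
  · intro x
    rw [hA.submodule_iSup_eq_top]; trivial

/-! ### Filtrations indexed by integers, and leading symbols -/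

section Filtration

variable {k : Type*} {H : Type*} {M : Type*} {G : Type*} {GM : Type*} [Field k]
  [CommRing H] [Algebra k H] [AddCommGroup M] [Module k M] [Module H M] [IsScalarTower k H M]
  [CommRing G] [Algebra k G] [AddCommGroup GM] [Module k GM] [Module G GM]
  [IsScalarTower k G GM]

/-- The filtration of `H` extended to integer indices by `0` in negative degrees, so that degree
estimates can be shifted downwards freely. -/
def FilteredAlgData.Fz (D : FilteredAlgData k H) (n : ℤ) : Submodule k H :=
  if 0 ≤ n then D.F n.toNat else ⊥

lemma FilteredAlgData.Fz_natCast (D : FilteredAlgData k H) (n : ℕ) : D.Fz n = D.F n := by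
  simp [FilteredAlgData.Fz]

lemma FilteredAlgData.eq_zero_of_mem_Fz (D : FilteredAlgData k H) {n : ℤ} (hn : n < 0) {a : H}
    (ha : a ∈ D.Fz n) : a = 0 := by
  rw [FilteredAlgData.Fz, if_neg (by omega)] at ha
  exact ha

lemma FilteredAlgData.Fz_mono (D : FilteredAlgData k H) : Monotone D.Fz := by
  intro m n hmn
  by_cases hm : 0 ≤ m
  · rw [FilteredAlgData.Fz, FilteredAlgData.Fz, if_pos hm, if_pos (hm.trans hmn)]
    exact D.mono (by omega)
  · rw [FilteredAlgData.Fz, if_neg hm]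
    exact bot_le

lemma FilteredAlgData.mul_mem_F (D : FilteredAlgData k H) {i j : ℕ} {a b : H} (ha : a ∈ D.F i)
    (hb : b ∈ D.F j) : a * b ∈ D.F (i + j) :=
  D.mul_le i j (Submodule.mul_mem_mul ha hb)

lemma FilteredAlgData.mul_mem_Fz (D : FilteredAlgData k H) {i : ℕ} {n : ℤ} {a b : H}
    (ha : a ∈ D.F i) (hb : b ∈ D.Fz n) : a * b ∈ D.Fz (i + n) := by
  rcases lt_or_ge n 0 with hn | hn
  · simp [D.eq_zero_of_mem_Fz hn hb]
  · lift n to ℕ using hn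
    rw [D.Fz_natCast] at hb
    rw [← Nat.cast_add, D.Fz_natCast]
    exact D.mul_mem_F ha hb

lemma GradedRealization.sigma_eq_zero_iff {D : FilteredAlgData k H} (R : GradedRealization D G)
    (j : ℕ) (a : D.F j) : R.σ j a = 0 ↔ (a : H) ∈ D.Fz ((j : ℤ) - 1) := by
  cases j with
  | zero => rw [R.ker_zero, FilteredAlgData.Fz, if_neg (by simp)]; rfl
  | succ i =>
    rw [R.ker_succ, show ((i + 1 : ℕ) : ℤ) - 1 = (i : ℕ) by push_cast; ring, D.Fz_natCast]

lemma GradedModRealization.eq_zero_or_mem {D : FilteredAlgData k H} {R : GradedRealization D G}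
    {DM : FilteredModData k H M D} (RM : GradedModRealization R DM GM) (j : ℕ) (m : DM.FM j)
    (hm : RM.τ j m = 0) : (m : M) = 0 ∨ ∃ i, i + 1 = j ∧ (m : M) ∈ DM.FM i := by
  cases j with
  | zero => exact Or.inl ((RM.ker_zero m).1 hm)
  | succ i => exact Or.inr ⟨i, rfl, (RM.ker_succ i m).1 hm⟩

lemma GradedRealization.exists_leading {D : FilteredAlgData k H} (R : GradedRealization D G)
    {a : H} (ha : a ≠ 0) : ∃ d, ∃ h : a ∈ D.F d, R.σ d ⟨a, h⟩ ≠ 0 := by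
  classical
  refine ⟨Nat.find (D.exhaustive a), Nat.find_spec (D.exhaustive a), ?_⟩
  intro h0
  rw [R.sigma_eq_zero_iff] at h0
  rcases Nat.eq_zero_or_pos (Nat.find (D.exhaustive a)) with hz | hp
  · exact ha (D.eq_zero_of_mem_Fz (by omega) h0)
  · obtain ⟨i, hi⟩ := Nat.exists_eq_succ_of_ne_zero hp.ne'
    have h1 : a ∈ D.Fz (i : ℕ) := by
      convert h0 using 2
      rw [hi]; push_cast; ring
    rw [D.Fz_natCast] at h1
    exact Nat.find_min (D.exhaustive a) (m := i) (by omega) h1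

/-- If the associated graded ring is a domain, leading symbols of nonzero elements multiply to a
nonzero symbol, so the filtered ring is a domain. -/
lemma GradedRealization.isDomain [IsDomain G] {D : FilteredAlgData k H}
    (R : GradedRealization D G) : IsDomain H := by
  have hnt : Nontrivial H := by
    refine ⟨1, 0, fun h => one_ne_zero (α := G) ?_⟩
    rw [← R.map_one']
    exact (R.ker_zero _).2 h
  have hnz : NoZeroDivisors H := by
    refine ⟨fun {a b} hab => ?_⟩
    by_contra! hne
    obtain ⟨i, hi, hi'⟩ := R.exists_leading hne.1
    obtain ⟨j, hj, hj'⟩ := R.exists_leading hne.2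
    refine mul_ne_zero hi' hj' ?_
    rw [R.map_mul', R.sigma_eq_zero_iff]
    simp [hab]
  exact NoZeroDivisors.to_isDomain H

/-- Multiplication by an element `t` of exact degree `d` is strict for the filtration. -/
lemma GradedRealization.mem_of_mul_mem [IsDomain G] {D : FilteredAlgData k H}
    (R : GradedRealization D G) {d : ℕ} {t : H} (ht : t ∈ D.F d) (ht0 : R.σ d ⟨t, ht⟩ ≠ 0)
    {n : ℤ} {a : H} (ha : a ∈ D.Fz n) (hta : t * a ∈ D.Fz (d + n - 1)) : a ∈ D.Fz (n - 1) := by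
  rcases lt_or_ge n 0 with hn | hn
  · simp [D.eq_zero_of_mem_Fz hn ha]
  · lift n to ℕ using hn
    rw [D.Fz_natCast] at ha
    have h : R.σ d ⟨t, ht⟩ * R.σ n ⟨a, ha⟩ = 0 := by
      rw [R.map_mul', R.sigma_eq_zero_iff]
      push_cast
      exact hta
    exact (R.sigma_eq_zero_iff n ⟨a, ha⟩).1 ((mul_eq_zero.1 h).resolve_left ht0)

/-! ### Lifting homogeneous relations -/

/-- For elements `m i` placed in degrees `n i`, the degree-`j` part of the filtered submodule they
generate: combinations `∑ hᵢ mᵢ` with `hᵢ ∈ F_{j - nᵢ}H`. -/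
def FilteredModData.comb {D : FilteredAlgData k H} (_DM : FilteredModData k H M D) {ι : Type*}
    (n : ι → ℕ) (m : ι → M) (j : ℕ) : Submodule k M :=
  Submodule.span k {x | ∃ i a, ∃ h ∈ D.F a, a + n i = j ∧ x = h • m i}

lemma FilteredModData.comb_le {D : FilteredAlgData k H} (DM : FilteredModData k H M D) {ι : Type*}
    (n : ι → ℕ) (m : ι → M) (hm : ∀ i, m i ∈ DM.FM (n i)) (j : ℕ) :
    DM.comb n m j ≤ DM.FM j := by
  rw [FilteredModData.comb, Submodule.span_le]
  rintro x ⟨i, a, h, ha, rfl, rfl⟩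
  exact DM.smul_le _ _ h ha _ (hm i)

/-- The `Gr H`-span of homogeneous elements is a homogeneous submodule, whose degree-`j` part
consists of symbols of degree-`j` combinations of lifts. -/
lemma GradedModRealization.span_le_iSup {D : FilteredAlgData k H} {R : GradedRealization D G}
    {DM : FilteredModData k H M D} (RM : GradedModRealization R DM GM) {ι : Type*}
    (n : ι → ℕ) (m : ∀ i, DM.FM (n i)) (x : GM)
    (hx : x ∈ Submodule.span G (Set.range fun i => RM.τ (n i) (m i))) :
    x ∈ ⨆ j, ((DM.comb n (fun i => (m i : M)) j).comap (DM.FM j).subtype).map (RM.τ j) := by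
  obtain ⟨pr, -, -, htop⟩ := exists_components _ R.internal
  obtain ⟨c, rfl⟩ := (Finsupp.mem_span_range_iff_exists_finsupp).1 hx
  refine Submodule.sum_mem _ fun i _ => ?_
  have hg := htop (c i)
  dsimp only
  generalize c i = g at hg
  induction hg using Submodule.iSup_induction' with
  | mem a g hg =>
    obtain ⟨h, rfl⟩ := hg
    rw [RM.map_smul']
    refine Submodule.mem_iSup_of_mem (a + n i) ⟨_, ?_, rfl⟩
    exact Submodule.subset_span ⟨i, a, h, h.2, rfl, rfl⟩
  | zero => rw [zero_smul]; exact Submodule.zero_mem _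
  | add x y _ _ hx hy => rw [add_smul]; exact Submodule.add_mem _ hx hy

/-- The homogeneous components of an element of the `Gr H`-span of homogeneous elements lift to
combinations of the same degree. -/
lemma GradedModRealization.component_mem {D : FilteredAlgData k H} {R : GradedRealization D G}
    {DM : FilteredModData k H M D} (RM : GradedModRealization R DM GM) {ι : Type*}
    (n : ι → ℕ) (m : ∀ i, DM.FM (n i)) {p : ℕ → GM →ₗ[k] GM}
    (hp : ∀ i, ∀ x ∈ LinearMap.range (RM.τ i), p i x = x)
    (hp' : ∀ i j, i ≠ j → ∀ x ∈ LinearMap.range (RM.τ i), p j x = 0) (j : ℕ) {x : GM}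
    (hx : x ∈ Submodule.span G (Set.range fun i => RM.τ (n i) (m i))) :
    ∃ q : DM.FM j, (q : M) ∈ DM.comb n (fun i => (m i : M)) j ∧ RM.τ j q = p j x := by
  have hproj : (⨆ i, ((DM.comb n (fun i => (m i : M)) i).comap (DM.FM i).subtype).map (RM.τ i)) ≤
      (((DM.comb n (fun i => (m i : M)) j).comap (DM.FM j).subtype).map
        (RM.τ j)).comap (p j) := by
    refine iSup_le fun i => ?_
    rintro y ⟨q, hq, rfl⟩
    rw [Submodule.mem_comap]
    by_cases hi : i = j
    · subst hi
      rw [hp _ _ ⟨q, rfl⟩]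
      exact ⟨q, hq, rfl⟩
    · rw [hp' i _ hi _ ⟨q, rfl⟩]
      exact Submodule.zero_mem _
  exact hproj (RM.span_le_iSup n m _ hx)

/-- Extracting a homogeneous component of a relation `s • τ_j(m) ∈ ⟨τ(mᵢ)⟩`: some nonzero
homogeneous component `σ_d(t)` of `s` satisfies the same relation, which then lifts to `M` modulo
lower filtration degree. -/
lemma GradedModRealization.exists_lift_smul {D : FilteredAlgData k H} {R : GradedRealization D G}
    {DM : FilteredModData k H M D} (RM : GradedModRealization R DM GM) {ι : Type*}
    (n : ι → ℕ) (m : ∀ i, DM.FM (n i)) {j : ℕ} (x : DM.FM j) (s : G) (hs : s ≠ 0)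
    (hx : s • RM.τ j x ∈ Submodule.span G (Set.range fun i => RM.τ (n i) (m i))) :
    ∃ (d : ℕ) (t : D.F d), R.σ d t ≠ 0 ∧ ∃ q : DM.FM (d + j),
      (q : M) ∈ DM.comb n (fun i => (m i : M)) (d + j) ∧
      RM.τ (d + j) q = R.σ d t • RM.τ j x := by
  classical
  obtain ⟨pG, hpG, hpG', htop⟩ := exists_components _ R.internal
  obtain ⟨p, hp, hp', -⟩ := exists_components _ RM.internal
  -- Multiplication by homogeneous elements of degree `j` shifts components by `j`.
  have hshift : ∀ d : ℕ, ∀ g ∈ ⨆ i, LinearMap.range (R.σ i),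
      p (d + j) (g • RM.τ j x) = pG d g • RM.τ j x ∧ pG d g ∈ LinearMap.range (R.σ d) := by
    intro d g hg
    induction hg using Submodule.iSup_induction' with
    | mem a g hg =>
      by_cases had : a = d
      · subst had
        rw [hpG a g hg]
        refine ⟨?_, hg⟩
        obtain ⟨h, rfl⟩ := hg
        rw [RM.map_smul']
        exact hp _ _ ⟨_, rfl⟩
      · rw [hpG' a d had g hg, zero_smul]
        refine ⟨?_, Submodule.zero_mem _⟩
        obtain ⟨h, rfl⟩ := hg
        rw [RM.map_smul']
        exact hp' (a + j) (d + j) (by omega) _ ⟨_, rfl⟩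
    | zero => simp
    | add x y _ _ hx hy =>
      rw [add_smul, map_add, map_add, hx.1, hy.1, add_smul]
      exact ⟨rfl, Submodule.add_mem _ hx.2 hy.2⟩
  -- A nonzero element has a nonzero component.
  have hne : ∃ d, pG d s ≠ 0 := by
    by_contra! hall
    obtain ⟨f, hf⟩ := (Submodule.mem_iSup_iff_exists_finsupp
      (fun i => LinearMap.range (R.σ i)) s).1 (htop s)
    refine hs ?_
    rw [← hf.2, Finsupp.sum]
    refine Finset.sum_eq_zero fun i hi => ?_
    have hsum := congrArg (pG i) hf.2
    rw [Finsupp.sum, map_sum, Finset.sum_eq_single_of_mem i hi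
      (fun b _ hb => hpG' b i hb _ (hf.1 b)), hpG i _ (hf.1 i), hall i] at hsum
    exact hsum
  obtain ⟨d, hd⟩ := hne
  obtain ⟨h1, t, ht⟩ := hshift d s (htop s)
  refine ⟨d, t, by rwa [ht], ?_⟩
  obtain ⟨q, hq, hq'⟩ := RM.component_mem n m hp hp' (d + j) hx
  exact ⟨q, hq, by rw [hq', h1, ht]⟩

/-! ### Filtered degree of functionals -/

/-- Linear functionals on `M` have bounded filtered degree, because `Gr M` is generated by
finitely many symbols. -/
lemma GradedModRealization.exists_degree_bound [IsDomain G] {D : FilteredAlgData k H}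
    {R : GradedRealization D G} {DM : FilteredModData k H M D}
    (RM : GradedModRealization R DM GM) [Module.Finite G GM] (φ : M →ₗ[H] H) :
    ∃ C : ℕ, ∀ j, ∀ x ∈ DM.FM j, φ x ∈ D.F (j + C) := by
  classical
  obtain ⟨p, hp, hp', htop⟩ := exists_components _ RM.internal
  let v : (Σ i, DM.FM i) → GM := fun z => RM.τ z.1 z.2
  have hspan : Submodule.span G (Set.range v) = ⊤ := by
    refine eq_top_iff.2 fun x _ => ?_
    have hx := htop x
    induction hx using Submodule.iSup_induction' with
    | mem i x hx =>
      obtain ⟨y, rfl⟩ := hx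
      exact Submodule.subset_span ⟨⟨i, y⟩, rfl⟩
    | zero => exact Submodule.zero_mem _
    | add x y _ _ hx hy => exact Submodule.add_mem _ (hx trivial) (hy trivial)
  obtain ⟨S, hS, hS'⟩ := (Submodule.fg_span_iff_fg_span_finset_subset (Set.range v)).1
    (hspan ▸ Module.Finite.fg_top)
  choose w hw using fun i : S => hS i.2
  have hrange : Set.range (fun i : S => RM.τ (w i).1 (w i).2) = (S : Set GM) := by
    ext y
    constructor
    · rintro ⟨i, rfl⟩
      have h : RM.τ (w i).1 (w i).2 = (i : GM) := hw i
      simp only [h]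
      exact i.2
    · exact fun hy => ⟨⟨y, hy⟩, hw ⟨y, hy⟩⟩
  choose c hc using fun i : S => D.exhaustive (φ ((w i).2 : M))
  refine ⟨Finset.univ.sup c, ?_⟩
  have hcomb : ∀ j, ∀ q ∈ DM.comb (fun i => (w i).1) (fun i => ((w i).2 : M)) j,
      φ q ∈ D.F (j + Finset.univ.sup c) := by
    intro j q hq
    refine Submodule.span_induction (p := fun q _ => φ q ∈ D.F (j + Finset.univ.sup c))
      ?_ ?_ ?_ ?_ hq
    · rintro _ ⟨i, a, h, ha, rfl, rfl⟩
      rw [map_smul, smul_eq_mul]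
      have hle : c i ≤ Finset.univ.sup c := Finset.le_sup (Finset.mem_univ i)
      exact D.mono (by omega) (D.mul_mem_F ha (hc i))
    · rw [map_zero]; exact Submodule.zero_mem _
    · intro x y _ _ hx hy
      rw [map_add]; exact Submodule.add_mem _ hx hy
    · intro a x _ hx
      rw [LinearMap.map_smul_of_tower]; exact Submodule.smul_mem _ _ hx
  have hstep : ∀ j, ∀ x : DM.FM j, ∃ q : DM.FM j,
      (q : M) ∈ DM.comb (fun i => (w i).1) (fun i => ((w i).2 : M)) j ∧ RM.τ j (x - q) = 0 := by
    intro j x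
    have hx : RM.τ j x ∈ Submodule.span G (Set.range fun i : S => RM.τ (w i).1 (w i).2) := by
      rw [hrange, ← hS', hspan]
      trivial
    obtain ⟨q, hq, hq'⟩ := RM.component_mem _ _ hp hp' j hx
    refine ⟨q, hq, ?_⟩
    rw [map_sub, hq', hp j _ ⟨x, rfl⟩, sub_self]
  intro j
  induction j with
  | zero =>
    intro x hx
    obtain ⟨q, hq, hq'⟩ := hstep 0 ⟨x, hx⟩
    have h0 : x - q = 0 := (RM.ker_zero _).1 hq'
    rw [sub_eq_zero.1 h0]
    exact hcomb 0 q hq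
  | succ j ih =>
    intro x hx
    obtain ⟨q, hq, hq'⟩ := hstep (j + 1) ⟨x, hx⟩
    have h0 : x - q ∈ DM.FM j := (RM.ker_succ j _).1 hq'
    rw [← sub_add_cancel x (q : M), map_add]
    exact Submodule.add_mem _ (D.mono (by omega) (ih _ h0)) (hcomb _ q hq)

/-- A functional killing lifts `m i` of homogeneous elements whose span has torsion quotient in
`Gr M` vanishes: its filtered degree can be lowered indefinitely. -/
lemma GradedModRealization.functional_eq_zero [IsDomain G] {D : FilteredAlgData k H}
    {R : GradedRealization D G} {DM : FilteredModData k H M D}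
    (RM : GradedModRealization R DM GM) [Module.Finite G GM] {ι : Type*}
    (n : ι → ℕ) (m : ∀ i, DM.FM (n i))
    (ht : ∀ j (x : DM.FM j), ∃ s : G, s ≠ 0 ∧
      s • RM.τ j x ∈ Submodule.span G (Set.range fun i => RM.τ (n i) (m i)))
    (φ : M →ₗ[H] H) (hφ : ∀ i, φ (m i) = 0) : φ = 0 := by
  obtain ⟨C, hC⟩ := RM.exists_degree_bound φ
  have hcomb : ∀ j, ∀ q ∈ DM.comb n (fun i => (m i : M)) j, φ q = 0 := by
    intro j q hq
    refine Submodule.span_induction (p := fun q _ => φ q = 0) ?_ ?_ ?_ ?_ hq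
    · rintro _ ⟨i, a, h, ha, rfl, rfl⟩
      rw [map_smul, hφ, smul_zero]
    · rw [map_zero]
    · intro x y _ _ hx hy
      rw [map_add, hx, hy, add_zero]
    · intro a x _ hx
      rw [LinearMap.map_smul_of_tower, hx, smul_zero]
  have key : ∀ N : ℕ, ∀ j, ∀ x ∈ DM.FM j, φ x ∈ D.Fz ((j : ℤ) + C - N) := by
    intro N
    induction N with
    | zero =>
      intro j x hx
      have h := hC j x hx
      rw [← D.Fz_natCast] at h
      simpa using h
    | succ N ih =>
      intro j x hx
      obtain ⟨s, hs, hsx⟩ := ht j ⟨x, hx⟩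
      obtain ⟨d, t, ht0, q, hq, hq'⟩ := RM.exists_lift_smul n m ⟨x, hx⟩ s hs hsx
      -- `t • x` agrees, modulo filtration degree below `d + j`, with an element killed by `φ`.
      have hφt : (t : H) * φ x ∈ D.Fz ((d : ℤ) + ((j : ℤ) + C - N) - 1) := by
        rw [RM.map_smul', ← sub_eq_zero, ← map_sub] at hq'
        have hval : φ (((q - ⟨(t : H) • x, DM.smul_le d j t t.2 x hx⟩ : DM.FM (d + j))) : M)
            = -((t : H) * φ x) := by
          rw [Submodule.coe_sub, map_sub, hcomb _ _ hq, map_smul, smul_eq_mul, zero_sub]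
        rcases RM.eq_zero_or_mem _ _ hq' with h0 | ⟨i, hi, hmem⟩
        · rw [h0, map_zero] at hval
          rw [neg_eq_zero.1 hval.symm]
          exact Submodule.zero_mem _
        · have h := ih i _ hmem
          rw [hval, Submodule.neg_mem_iff] at h
          exact D.Fz_mono (by omega) h
      have h := R.mem_of_mul_mem t.2 ht0 (ih j x hx) hφt
      exact D.Fz_mono (by push_cast; omega) h
  ext x
  obtain ⟨j, hj⟩ := DM.exhaustive x
  exact D.eq_zero_of_mem_Fz (by push_cast; omega) (key (j + C + 1) j x hj)

/-- Lifts of `Gr H`-independent homogeneous elements are `H`-independent: the top-degree symbols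
of a relation among the lifts form a relation in `Gr M`. -/
lemma GradedModRealization.linearIndependent_lift {D : FilteredAlgData k H}
    {R : GradedRealization D G} {DM : FilteredModData k H M D}
    (RM : GradedModRealization R DM GM) {ι : Type*} (n : ι → ℕ) (m : ∀ i, DM.FM (n i))
    (hv : LinearIndependent G fun i => RM.τ (n i) (m i)) :
    LinearIndependent H fun i => (m i : M) := by
  rw [linearIndependent_iff']
  intro S h hsum
  have hstep : ∀ e : ℤ, (∀ i ∈ S, h i ∈ D.Fz (e - n i)) → ∀ i ∈ S, h i ∈ D.Fz (e - 1 - n i) := by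
    intro e he
    rcases lt_or_ge e 0 with hneg | hpos
    · intro i hi
      rw [D.eq_zero_of_mem_Fz (by omega) (he i hi)]
      exact Submodule.zero_mem _
    lift e to ℕ using hpos
    have hex : ∀ i : S, ∃ (g : G) (y : DM.FM e), (y : M) = h i • (m i : M) ∧
        g • RM.τ (n i) (m i) = RM.τ e y ∧ (g = 0 → h i ∈ D.Fz ((e : ℤ) - 1 - n i)) := by
      intro i
      have hi := he i i.2
      rcases lt_or_ge e (n i) with hlt | hge
      · have h0 := D.eq_zero_of_mem_Fz (by omega) hi
        refine ⟨0, 0, by simp [h0], by simp, fun _ => ?_⟩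
        rw [h0]
        exact Submodule.zero_mem _
      · obtain ⟨a, rfl⟩ := Nat.exists_eq_add_of_le' hge
        have hi' : h i ∈ D.F a := by
          rw [← D.Fz_natCast]
          convert hi using 2
          push_cast; ring
        refine ⟨R.σ a ⟨h i, hi'⟩, ⟨h i • (m i : M), DM.smul_le a _ _ hi' _ (m i).2⟩, rfl,
          RM.map_smul' _ _ _ _, fun hg => ?_⟩
        rw [R.sigma_eq_zero_iff] at hg
        exact D.Fz_mono (by push_cast; omega) hg
    choose g y hy hgy hg using hex
    have hy0 : ∑ i : S, y i = 0 := by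
      apply Subtype.ext
      rw [Submodule.coe_sum, Submodule.coe_zero, ← hsum, ← Finset.sum_coe_sort S]
      exact Finset.sum_congr rfl fun i _ => hy i
    have hrel : ∑ i : S, g i • RM.τ (n i) (m i) = 0 := by
      simp_rw [hgy, ← map_sum, hy0, map_zero]
    have hind := hv.comp (fun i : S => (i : ι)) Subtype.val_injective
    intro i hi
    exact hg ⟨i, hi⟩ (Fintype.linearIndependent_iff.1 hind g hrel ⟨i, hi⟩)
  choose c hc using fun i => D.exhaustive (h i)
  have key : ∀ N : ℕ, ∀ i ∈ S, h i ∈ D.Fz (((S.sup fun i => c i + n i : ℕ) : ℤ) - N - n i) := by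
    intro N
    induction N with
    | zero =>
      intro i hi
      have hle : c i + n i ≤ S.sup fun i => c i + n i :=
        Finset.le_sup (f := fun i => c i + n i) hi
      have h1 := hc i
      rw [← D.Fz_natCast] at h1
      exact D.Fz_mono (by omega) h1
    | succ N ih =>
      intro i hi
      exact D.Fz_mono (by push_cast; omega) (hstep _ ih i hi)
  intro i hi
  exact D.eq_zero_of_mem_Fz (by push_cast; omega)
    (key ((S.sup fun i => c i + n i) + 1) i hi)

end Filtration

/-! ### Comparison of ranks -/

/-- Let `H` be a filtered commutative `k`-algebra and `M` a finitely generated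
compatibly filtered `H`-module. If the associated graded ring `Gr H` (realized here by `G`) is
an integral domain and the associated graded module `Gr M` (realized here by `GM`) is a finitely
generated `Gr H`-module, then the rank of `M` over `H` equals the rank of `Gr M` over `Gr H`,
i.e. `dim_{Frac H} (Frac H ⊗[H] M) = dim_{Frac (Gr H)} (Frac (Gr H) ⊗[Gr H] Gr M)`. -/
theorem azumaya_stmt1 {k : Type u₁} {H : Type u₂} {M : Type u₃} {G : Type u₄} {GM : Type u₅} [Field k] [CommRing H] [Algebra k H]
    [AddCommGroup M] [Module k M] [Module H M] [IsScalarTower k H M]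
    [CommRing G] [Algebra k G] [IsDomain G]
    [AddCommGroup GM] [Module k GM] [Module G GM] [IsScalarTower k G GM]
    (D : FilteredAlgData k H) (R : GradedRealization D G)
    (DM : FilteredModData k H M D) (RM : GradedModRealization R DM GM)
    [Module.Finite H M] [Module.Finite G GM] :
    Cardinal.lift.{max u₄ u₅}
        (Module.rank (FractionRing H) (FractionRing H ⊗[H] M))
      = Cardinal.lift.{max u₂ u₃}
        (Module.rank (FractionRing G) (FractionRing G ⊗[G] GM)) := by
  have hH : IsDomain H := R.isDomain
  let v : (Σ i, DM.FM i) → GM := fun z => RM.τ z.1 z.2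
  obtain ⟨s, hs, hmax⟩ := exists_maximal_linearIndepOn G v
  let e : s → GM := fun z => RM.τ z.1.1 z.1.2
  have he : LinearIndependent G e := hs
  have hrange : Set.range e = v '' s := by
    rw [Set.image_eq_range]
  have hhom : ∀ j (x : DM.FM j), ∃ a : G, a ≠ 0 ∧
      a • RM.τ j x ∈ Submodule.span G (Set.range e) := by
    intro j x
    by_cases hx : (⟨j, x⟩ : Σ i, DM.FM i) ∈ s
    · exact ⟨1, one_ne_zero, by
        rw [one_smul]; exact Submodule.subset_span ⟨⟨⟨j, x⟩, hx⟩, rfl⟩⟩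
    · obtain ⟨a, ha, hax⟩ := hmax _ hx
      exact ⟨a, ha, by rwa [hrange]⟩
  -- Torsion modulo the span propagates from homogeneous elements to sums.
  have htG : ∀ x : GM, ∃ a : G, a ≠ 0 ∧ a • x ∈ Submodule.span G (Set.range e) := by
    obtain ⟨-, -, -, htop⟩ := exists_components _ RM.internal
    intro x
    have hx := htop x
    induction hx using Submodule.iSup_induction' with
    | mem i x hx =>
      obtain ⟨y, rfl⟩ := hx
      exact hhom i y
    | zero => exact ⟨1, one_ne_zero, by simp⟩
    | add x y _ _ hx hy =>
      obtain ⟨a, ha, hax⟩ := hx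
      obtain ⟨b, hb, hby⟩ := hy
      refine ⟨a * b, mul_ne_zero ha hb, ?_⟩
      rw [smul_add, mul_comm, mul_smul, mul_comm, mul_smul]
      exact Submodule.add_mem _ (Submodule.smul_mem _ _ hax) (Submodule.smul_mem _ _ hby)
  have hm : LinearIndependent H fun z : s => (z.1.2 : M) :=
    RM.linearIndependent_lift (fun z : s => z.1.1) (fun z => z.1.2) he
  -- A non-torsion class in `M ⧸ ⟨mᵢ⟩` would give a nonzero functional on `M` killing all `mᵢ`.
  have htH : ∀ x : M, ∃ a : H, a ≠ 0 ∧
      a • x ∈ Submodule.span H (Set.range fun z : s => (z.1.2 : M)) := by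
    intro x
    by_contra! hx
    set N := Submodule.span H (Set.range fun z : s => (z.1.2 : M)) with hN
    obtain ⟨φ, hφ⟩ := exists_functional_ne_zero (H := H) (N.mkQ x) (by
      intro a ha h
      rw [← map_smul, Submodule.mkQ_apply, Submodule.Quotient.mk_eq_zero] at h
      exact hx a ha h)
    have h0 : φ.comp N.mkQ = 0 := by
      refine RM.functional_eq_zero (fun z : s => z.1.1) (fun z => z.1.2) hhom _ fun z => ?_
      have hz : N.mkQ (z.1.2 : M) = 0 := by
        rw [Submodule.mkQ_apply, Submodule.Quotient.mk_eq_zero]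
        exact Submodule.subset_span ⟨z, rfl⟩
      rw [LinearMap.comp_apply, hz, map_zero]
    exact hφ (LinearMap.congr_fun h0 x)
  have hrG := lift_rank_eq_of_torsion e he htG
  have hrH := lift_rank_eq_of_torsion _ hm htH
  have hbG := (TensorProduct.isBaseChange G GM (FractionRing G)).lift_rank_eq
  have hbH := (TensorProduct.isBaseChange H M (FractionRing H)).lift_rank_eq
  apply Cardinal.lift_injective.{max u₂ u₃ u₄ u₅}
  have h1 := congrArg Cardinal.lift.{max u₂ u₃ u₄ u₅} hbH
  have h2 := congrArg Cardinal.lift.{max u₂ u₃ u₄ u₅} hbG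
  have h3 := congrArg Cardinal.lift.{max u₂ u₃ u₄ u₅} hrH
  have h4 := congrArg Cardinal.lift.{max u₂ u₃ u₄ u₅} hrG
  simp only [Cardinal.lift_lift] at h1 h2 h3 h4 ⊢
  exact (h1.trans h3).trans (h2.trans h4).symm
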